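/- For all n ≥ 0, T_2(81n+37) ≡ 0 (mod 24) and T_2(81n+64) ≡ 0 (mod 24). -/

import Mathlib

noncomputable def Tcount (ℓ k n : ℕ) : ℕ :=
  Nat.card {f : Fin k → Σ m : ℕ, Nat.Partition m //
    (∑ i, (f i).1) = n ∧ ∀ i, ∀ p ∈ (f i).2.parts, ¬ ℓ ∣ p}

open PowerSeries Finset

def tripEquiv (n : ℕ) : {f : Fin 3 → Σ m : ℕ, Nat.Partition m //
    (∑ i, (f i).1) = n ∧ ∀ i, ∀ p ∈ (f i).2.parts, ¬ 2 ∣ p} ≃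
    Σ g : {g : Fin 3 → ℕ // g ∈ Finset.piAntidiag Finset.univ n},
      ∀ i, {p : Nat.Partition (g.1 i) // p ∈ Nat.Partition.restricted (g.1 i) (¬ 2 ∣ ·)} where
  toFun f := ⟨⟨fun i => (f.1 i).1, by simpa using f.2.1⟩,
    fun i => ⟨(f.1 i).2, by simpa [Nat.Partition.restricted] using f.2.2 i⟩⟩
  invFun g := ⟨fun i => ⟨g.1.1 i, (g.2 i).1⟩, by
    refine ⟨(Finset.mem_piAntidiag.1 g.1.2).1, fun i => ?_⟩
    simpa [Nat.Partition.restricted] using (g.2 i).2⟩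
  left_inv f := rfl
  right_inv g := rfl

lemma Tcount_eq_sum (n : ℕ) : Tcount 2 3 n = ∑ g ∈ Finset.piAntidiag (Finset.univ : Finset (Fin 3)) n,
    ∏ i, (Nat.Partition.restricted (g i) (¬ 2 ∣ ·)).card := by
  rw [Tcount, Nat.card_congr (tripEquiv n), Nat.card_sigma, ← Finset.sum_coe_sort (Finset.piAntidiag (Finset.univ : Finset (Fin 3)) n)]
  refine Finset.sum_congr rfl fun g _ => ?_
  rw [Nat.card_pi]
  refine Finset.prod_congr rfl fun i _ => ?_
  simp

lemma Tcount_eq_coeff (R : Type*) [CommRing R] (n : ℕ) : (Tcount 2 3 n : R) =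
    coeff n ((PowerSeries.mk fun n ↦ ((Nat.Partition.countRestricted n 2).card : R)) ^ 3) := by
  have : ∀ P : R⟦X⟧, P ^ 3 = ∏ i : Fin 3, P := by intro P; simp
  rw [this, coeff_prod, Tcount_eq_sum]
  push_cast
  symm
  refine Finset.sum_nbij' (fun l => ⇑l) (fun g => Finsupp.equivFunOnFinite.symm g) ?_ ?_ ?_ ?_ ?_
  · intro l hl
    simpa [Finset.mem_finsuppAntidiag] using hl
  · intro l hl
    simpa [Finset.mem_finsuppAntidiag] using hl
  · intro l _
    simp
  · intro l _
    simp
  intro l _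
  refine Finset.prod_congr rfl fun i _ => ?_
  rw [coeff_mk, Nat.Partition.card_restricted_eq_card_countRestricted _ two_pos]

/-- `∏_{i=1}^m (1+X^i)` -/
noncomputable def Dp (R : Type*) [CommRing R] (m : ℕ) : R⟦X⟧ := ∏ i ∈ range m, (1 + X ^ (i + 1))

lemma Dp_cong (R : Type*) [CommRing R] (m a : ℕ) : X ^ (m + 1) ∣ Dp R (m + a) - Dp R m := by
  induction a with
  | zero => simp
  | succ a ih =>
    have : Dp R (m + (a + 1)) - Dp R m = (Dp R (m + a) - Dp R m) + X ^ (m + 1) * (X ^ a * Dp R (m + a)) := by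
      rw [Dp, ← add_assoc, prod_range_succ, ← Dp]; ring
    rw [this]
    exact dvd_add ih (dvd_mul_right _ _)

lemma genfun_cong (R : Type*) [CommRing R] (m : ℕ) : X ^ (m + 1) ∣
    (PowerSeries.mk fun n ↦ ((Nat.Partition.countRestricted n 2).card : R)) - Dp R m := by
  rw [X_pow_dvd_iff]
  intro d hd
  let _ : TopologicalSpace R := ⊥
  have _ : DiscreteTopology R := ⟨rfl⟩
  have h := (Nat.Partition.hasProd_powerSeriesMk_card_countRestricted R two_pos)
  open scoped PowerSeries.WithPiTopology in
  have h2 := h.tendsto_prod_nat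
  have h3 := ((PowerSeries.WithPiTopology.continuous_coeff R d).tendsto _).comp h2
  rw [nhds_discrete, Filter.tendsto_pure] at h3
  obtain ⟨N, hN⟩ := (h3.and (Filter.eventually_ge_atTop m)).exists
  obtain ⟨a, rfl⟩ := Nat.exists_eq_add_of_le hN.2
  have h4 : (∏ i ∈ range (m + a), ∑ j ∈ range 2, (X : R⟦X⟧) ^ ((i + 1) * j)) = Dp R (m + a) := by
    rw [Dp]; refine Finset.prod_congr rfl fun i _ => ?_
    simp [sum_range_succ]
  have h5 := hN.1
  simp only [Function.comp] at h5
  rw [h4] at h5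
  rw [map_sub, ← h5, ← map_sub]
  exact X_pow_dvd_iff.1 (Dp_cong R m a) d hd

lemma Tcount_coeff (R : Type*) [CommRing R] (n m : ℕ) (h : n ≤ m) : (Tcount 2 3 n : R) =
    coeff n (Dp R m ^ 3) := by
  rw [Tcount_eq_coeff, ← sub_eq_zero, ← map_sub]
  refine X_pow_dvd_iff.1 ((genfun_cong R m).trans (sub_dvd_pow_sub_pow _ _ 3)) n (by omega)

lemma Tcount_three (n : ℕ) (h : ¬ 3 ∣ n) : 3 ∣ Tcount 2 3 n := by
  have : Fact (Nat.Prime 3) := ⟨Nat.prime_three⟩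
  rw [← CharP.cast_eq_zero_iff (ZMod 3) 3, Tcount_coeff (ZMod 3) n n le_rfl]
  have h1 : Dp (ZMod 3) n = ((∏ i ∈ range n, (1 + Polynomial.X ^ (i + 1)) : Polynomial (ZMod 3)) : (ZMod 3)⟦X⟧) := by
    rw [Dp, ← Polynomial.coeToPowerSeries.ringHom_apply, map_prod]
    simp
  rw [h1, ← Polynomial.coe_pow, ← ZMod.expand_card, Polynomial.coeff_coe, Polynomial.coeff_expand (by norm_num), if_neg h]
/-- Gaussian binomial -/
def gb {R : Type*} [CommRing R] (q : R) : ℕ → ℕ → R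
  | _, 0 => 1
  | 0, _ + 1 => 0
  | n + 1, k + 1 => gb q n k + q ^ (k + 1) * gb q n (k + 1)

/-- `(q;q)_m` -/
def Ap {R : Type*} [CommRing R] (q : R) (m : ℕ) : R := ∏ i ∈ range m, (1 - q ^ (i + 1))

lemma Ap_succ {R : Type*} [CommRing R] (q : R) (m : ℕ) : Ap q (m + 1) = Ap q m * (1 - q ^ (m + 1)) := by
  rw [Ap, prod_range_succ, ← Ap]

lemma gb_zero_right {R : Type*} [CommRing R] (q : R) (n : ℕ) : gb q n 0 = 1 := by
  cases n <;> rfl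

lemma gb_lt {R : Type*} [CommRing R] (q : R) (n k : ℕ) (h : n < k) : gb q n k = 0 := by
  induction n generalizing k with
  | zero => cases k with
    | zero => omega
    | succ k => rfl
  | succ n ih => cases k with
    | zero => omega
    | succ k => rw [gb, ih k (by omega), ih (k + 1) (by omega)]; simp

lemma gb_self {R : Type*} [CommRing R] (q : R) (n : ℕ) : gb q n n = 1 := by
  induction n with
  | zero => rfl
  | succ n ih => rw [gb, ih, gb_lt q n (n + 1) (by omega)]; simp

lemma gb_mul {R : Type*} [CommRing R] (q : R) (n k : ℕ) :
    gb q (k + n) k * (Ap q k * Ap q n) = Ap q (k + n) := by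
  induction k generalizing n with
  | zero => simp [gb_zero_right, Ap]
  | succ k ihk =>
    induction n with
    | zero => simp [gb_self, Ap]
    | succ n ihn =>
      have e : k + 1 + (n + 1) = (k + n + 1) + 1 := by ring
      have h1 := ihk (n + 1)
      have e1 : k + (n + 1) = k + n + 1 := by ring
      have e2 : k + 1 + n = k + n + 1 := by ring
      rw [e1] at h1
      rw [e2] at ihn
      rw [e, gb, Ap_succ q (k + n + 1)]
      rw [Ap_succ] at h1 ihn
      rw [Ap_succ q k, Ap_succ q n]
      linear_combination (1 - q ^ (k + 1)) * h1 + q ^ (k + 1) * (1 - q ^ (n + 1)) * ihn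

lemma q_binom {R : Type*} [CommRing R] (q y z : R) (N : ℕ) :
    ∏ i ∈ range N, (y + z * q ^ i) =
      ∑ k ∈ range (N + 1), q ^ (k.choose 2) * gb q N k * z ^ k * y ^ (N - k) := by
  induction N generalizing z with
  | zero => simp [gb]
  | succ N ih =>
    have h := ih (z * q)
    rw [prod_range_succ']
    have h1 : ∏ i ∈ range N, (y + z * q ^ (i + 1)) = ∏ i ∈ range N, (y + z * q * q ^ i) :=
      prod_congr rfl fun i _ => by ring
    rw [h1, h, sum_range_succ' _ (N + 1)]
    have h2 : ∀ k ∈ range (N + 1), q ^ ((k + 1).choose 2) * gb q (N + 1) (k + 1) * z ^ (k + 1) * y ^ (N + 1 - (k + 1))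
        = q ^ (k.choose 2) * gb q N k * (z * q) ^ k * y ^ (N - k) * z
        + q ^ ((k + 1).choose 2) * gb q N (k + 1) * (z * q) ^ (k + 1) * y ^ (N - k) := by
      intro k _
      have : (k + 1).choose 2 = k + k.choose 2 := by rw [Nat.choose_succ_succ']; simp
      rw [gb, this, Nat.add_sub_add_right]
      ring
    rw [sum_congr rfl h2, sum_add_distrib, ← sum_mul, pow_zero, mul_one, mul_add, add_comm, add_assoc]
    congr 1
    rw [sum_range_succ' _ N, sum_range_succ _ N, gb_lt q N (N + 1) (by omega), add_mul, sum_mul]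
    simp only [mul_zero, zero_mul, add_zero, gb_zero_right]
    congr 1
    · refine sum_congr rfl fun k hk => ?_
      rw [mem_range] at hk
      have : N - k = N - (k + 1) + 1 := by omega
      rw [this, pow_succ]
      ring
    · simp [pow_succ]

lemma Ap_unit (q : ℤ⟦X⟧) (hq : constantCoeff q = 0) (m : ℕ) : IsUnit (Ap q m) := by
  rw [isUnit_iff_constantCoeff, Ap, map_prod]
  simp [hq]

lemma Ap_cong (q : ℤ⟦X⟧) (m a : ℕ) (h : m ≤ a) : q ^ (m + 1) ∣ Ap q a - Ap q m := by
  obtain ⟨a, rfl⟩ := Nat.exists_eq_add_of_le h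
  clear h
  induction a with
  | zero => simp
  | succ a ih =>
    have : Ap q (m + (a + 1)) - Ap q m = (Ap q (m + a) - Ap q m) - q ^ (m + 1) * (q ^ a * Ap q (m + a)) := by
      rw [← add_assoc, Ap_succ]; ring
    rw [this]
    exact dvd_sub ih (dvd_mul_right _ _)

lemma gb_cong (q : ℤ⟦X⟧) (hq : constantCoeff q = 0) (N k m M : ℕ) (h1 : m ≤ k) (h2 : m + k ≤ N)
    (h3 : m ≤ M) : q ^ (m + 1) ∣ gb q N k * Ap q M - 1 := by
  obtain ⟨l, rfl⟩ := Nat.exists_eq_add_of_le (show k ≤ N by omega)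
  have hu := Ap_unit q hq m
  have hg := gb_mul q l k
  have c1 := Ap_cong q m k h1
  have c2 := Ap_cong q m l (by omega)
  have c3 := Ap_cong q m (k + l) (by omega)
  have c4 := Ap_cong q m M h3
  rw [← hu.dvd_mul_left]
  obtain ⟨u1, c1⟩ := c1
  obtain ⟨u2, c2⟩ := c2
  obtain ⟨u3, c3⟩ := c3
  obtain ⟨u4, c4⟩ := c4
  refine ⟨u3 + gb q (k + l) k * (Ap q m * u4 - u1 * Ap q l - Ap q m * u2), ?_⟩
  linear_combination hg + c3 + gb q (k + l) k * (Ap q m * c4 - c1 * Ap q l - Ap q m * c2)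

/-- `∏_{i<n} (1 - X^(2i+1))` -/
noncomputable def Op (n : ℕ) : ℤ⟦X⟧ := ∏ i ∈ range n, (1 - X ^ (2 * i + 1))

/-- distance -/
def ds (k n : ℕ) : ℕ := (k - n) + (n - k)

noncomputable def phi (n : ℕ) : ℤ⟦X⟧ := ∑ k ∈ range (2 * n + 1), (-1) ^ (k + n) * X ^ (ds k n ^ 2)

lemma choose_two_mul (k : ℕ) : 2 * k.choose 2 + k = k ^ 2 := by
  induction k with
  | zero => rfl
  | succ k ih => rw [Nat.choose_succ_succ']; simp; linarith

lemma prod_X_odd (n : ℕ) : ∏ i ∈ range n, (X : ℤ⟦X⟧) ^ (2 * i + 1) = X ^ (n ^ 2) := by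
  induction n with
  | zero => simp
  | succ n ih => rw [prod_range_succ, ih]; ring

lemma finite_phi (n : ℕ) : Op n ^ 2 =
    ∑ k ∈ range (2 * n + 1), (-1) ^ (k + n) * X ^ (ds k n ^ 2) * gb (X ^ 2 : ℤ⟦X⟧) (2 * n) k := by
  have h := q_binom (X ^ 2 : ℤ⟦X⟧) (X ^ (2 * n)) (-X) (2 * n)
  have hl : ∏ i ∈ range (2 * n), ((X : ℤ⟦X⟧) ^ (2 * n) + -X * (X ^ 2) ^ i) = X ^ (3 * n ^ 2) * ((-1) ^ n * Op n ^ 2) := by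
    have e : 2 * n = n + n := by ring
    conv_lhs => rw [e, prod_range_add]
    have h1 : ∏ i ∈ range n, ((X : ℤ⟦X⟧) ^ (n + n) + -X * (X ^ 2) ^ i) = (-1) ^ n * X ^ (n ^ 2) * Op n := by
      have : ∀ i ∈ range n, ((X : ℤ⟦X⟧) ^ (n + n) + -X * (X ^ 2) ^ i) =
          (-1) * X ^ (2 * i + 1) * (1 - X ^ (2 * (n - 1 - i) + 1)) := by
        intro i hi
        rw [mem_range] at hi
        obtain ⟨j, rfl⟩ : ∃ j, n = i + 1 + j := ⟨n - (i + 1), by omega⟩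
        have : i + 1 + j - 1 - i = j := by omega
        rw [this]
        ring
      rw [prod_congr rfl this, prod_mul_distrib, prod_mul_distrib, prod_const, prod_X_odd, card_range,
        prod_range_reflect (fun i => (1 : ℤ⟦X⟧) - X ^ (2 * i + 1)) n, Op]
    have h2 : ∏ i ∈ range n, ((X : ℤ⟦X⟧) ^ (n + n) + -X * (X ^ 2) ^ (n + i)) = X ^ (2 * n ^ 2) * Op n := by
      have : ∀ i ∈ range n, ((X : ℤ⟦X⟧) ^ (n + n) + -X * (X ^ 2) ^ (n + i)) =
          X ^ (2 * n) * (1 - X ^ (2 * i + 1)) := by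
        intro i _
        ring
      rw [prod_congr rfl this, prod_mul_distrib, prod_const, card_range, ← Op]
      ring
    rw [h1, h2]
    ring
  have hr : ∑ k ∈ range (2 * n + 1), (X ^ 2 : ℤ⟦X⟧) ^ (k.choose 2) * gb (X ^ 2 : ℤ⟦X⟧) (2 * n) k * (-X) ^ k * (X ^ (2 * n)) ^ (2 * n - k)
     = X ^ (3 * n ^ 2) * ((-1) ^ n * ∑ k ∈ range (2 * n + 1), (-1) ^ (k + n) * X ^ (ds k n ^ 2) * gb (X ^ 2 : ℤ⟦X⟧) (2 * n) k) := by
    rw [mul_sum, mul_sum]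
    refine sum_congr rfl fun k hk => ?_
    rw [mem_range] at hk
    have he : 2 * k.choose 2 + k + 2 * n * (2 * n - k) = 3 * n ^ 2 + ds k n ^ 2 := by
      rw [choose_two_mul]
      unfold ds
      rcases le_total k n with h | h
      · obtain ⟨j, rfl⟩ := Nat.exists_eq_add_of_le h
        have : 2 * (k + j) - k = k + 2 * j := by omega
        rw [this]; simp; ring
      · obtain ⟨j, rfl⟩ := Nat.exists_eq_add_of_le h
        obtain ⟨l, rfl⟩ : ∃ l, n = j + l := ⟨n - j, by omega⟩
        have : 2 * (j + l) - (j + l + j) = l := by omega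
        rw [this]; simp; ring
    have h1 : (-1 : ℤ⟦X⟧) ^ n * (-1) ^ (k + n) = (-1) ^ k := by
      rw [← pow_add, show n + (k + n) = k + 2 * n by ring, pow_add, pow_mul]; simp
    calc _ = (-1) ^ k * X ^ (2 * k.choose 2 + k + 2 * n * (2 * n - k)) * gb (X ^ 2 : ℤ⟦X⟧) (2 * n) k := by
          rw [neg_pow]; ring
      _ = _ := by rw [he, ← h1]; ring
  rw [hl, hr] at h
  have h' := X_pow_mul_cancel h
  exact (((isUnit_one (M := ℤ⟦X⟧)).neg.pow n).mul_right_inj).1 h'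

lemma phi_cong (n : ℕ) : X ^ (2 * n + 1) ∣ Op n ^ 2 * Ap (X ^ 2 : ℤ⟦X⟧) n - phi n := by
  rw [finite_phi, phi, sum_mul, ← sum_sub_distrib]
  refine dvd_sum fun k hk => ?_
  rw [mem_range] at hk
  have hc := gb_cong (X ^ 2 : ℤ⟦X⟧) (by simp) (2 * n) k (n - ds k n) n (by unfold ds; omega) (by unfold ds; omega) (by omega)
  have : (-1) ^ (k + n) * X ^ (ds k n ^ 2) * gb (X ^ 2 : ℤ⟦X⟧) (2 * n) k * Ap (X ^ 2) n - (-1) ^ (k + n) * X ^ (ds k n ^ 2)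
    = (-1) ^ (k + n) * (X ^ (ds k n ^ 2) * (gb (X ^ 2 : ℤ⟦X⟧) (2 * n) k * Ap (X ^ 2) n - 1)) := by ring
  rw [this]
  apply Dvd.dvd.mul_left
  refine Dvd.dvd.trans ?_ (mul_dvd_mul_left _ hc)
  rw [← pow_mul, ← pow_add]
  apply pow_dvd_pow
  have : ds k n ≤ n := by unfold ds; omega
  obtain ⟨j, hj⟩ := Nat.exists_eq_add_of_le this
  have e : n - ds k n = j := by omega
  rw [e]
  generalize ds k n = d at *
  subst hj
  nlinarith [sq_nonneg ((d : ℤ) - 1), (by rcases d with _ | d <;> nlinarith : 2 * d ≤ d ^ 2 + 1)]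

lemma Op_Ap (n : ℕ) : Op n * Ap (X ^ 2 : ℤ⟦X⟧) n = Ap X (2 * n) := by
  induction n with
  | zero => simp [Op, Ap]
  | succ n ih =>
    rw [show 2 * (n + 1) = 2 * n + 1 + 1 by ring, Ap_succ, Ap_succ, Ap_succ, ← ih, Op, prod_range_succ, ← Op]
    ring

lemma Dp_Ap (n : ℕ) : Dp ℤ n * Ap (X : ℤ⟦X⟧) n = Ap (X ^ 2) n := by
  rw [Dp, Ap, Ap, ← prod_mul_distrib]
  exact prod_congr rfl fun i _ => by ring

lemma phi_Dp (n : ℕ) : X ^ (2 * n + 1) ∣ phi n * Dp ℤ (2 * n) - Ap (X : ℤ⟦X⟧) (2 * n) := by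
  have h1 := phi_cong n
  have h2 := Ap_cong (X ^ 2 : ℤ⟦X⟧) n (2 * n) (by omega)
  have h3 : (X : ℤ⟦X⟧) ^ (2 * n + 1) ∣ (X ^ 2) ^ (n + 1) := by
    rw [← pow_mul]; exact pow_dvd_pow _ (by omega)
  have h4 := h3.trans h2
  rw [← Dp_Ap (2 * n), ← Op_Ap] at h4
  rw [← Op_Ap]
  have h5 := (h4.mul_left (Op n)).sub (h1.mul_left (Dp ℤ (2 * n)))
  convert h5 using 1
  ring

lemma phi_odd (n : ℕ) : ∃ s, phi n = 1 + 2 * s := by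
  have e : 2 * n + 1 = (n + 1) + n := by ring
  refine ⟨∑ j ∈ range n, (-1) ^ (j + 1) * X ^ ((j + 1) ^ 2), ?_⟩
  rw [phi, e, sum_range_add, sum_range_succ, ← sum_range_reflect, two_mul]
  have h1 : ∑ j ∈ range n, (-1 : ℤ⟦X⟧) ^ (n - 1 - j + n) * X ^ (ds (n - 1 - j) n ^ 2) =
      ∑ j ∈ range n, (-1) ^ (j + 1) * X ^ ((j + 1) ^ 2) := by
    refine sum_congr rfl fun j hj => ?_
    rw [mem_range] at hj
    have : ds (n - 1 - j) n = j + 1 := by unfold ds; omega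
    rw [this]
    congr 1
    obtain ⟨l, rfl⟩ : ∃ l, n = j + 1 + l := ⟨n - (j + 1), by omega⟩
    rw [show j + 1 + l - 1 - j + (j + 1 + l) = j + 1 + 2 * l by omega, pow_add, pow_mul]
    simp
  have h2 : ∑ j ∈ range n, (-1 : ℤ⟦X⟧) ^ (n + 1 + j + n) * X ^ (ds (n + 1 + j) n ^ 2) =
      ∑ j ∈ range n, (-1) ^ (j + 1) * X ^ ((j + 1) ^ 2) := by
    refine sum_congr rfl fun j hj => ?_
    have : ds (n + 1 + j) n = j + 1 := by unfold ds; omega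
    rw [this]
    congr 1
    rw [show n + 1 + j + n = j + 1 + 2 * n by omega, pow_add, pow_mul]
    simp
  have h3 : (-1 : ℤ⟦X⟧) ^ (n + n) * X ^ (ds n n ^ 2) = 1 := by
    rw [← two_mul, pow_mul]; simp [ds]
  rw [h1, h2, h3]
  ring

lemma gb_map {R S : Type*} [CommRing R] [CommRing S] (f : R →+* S) (q : R) (n k : ℕ) :
    f (gb q n k) = gb (f q) n k := by
  induction n generalizing k with
  | zero => cases k <;> simp [gb]
  | succ n ih => cases k with
    | zero => simp [gb]
    | succ k => simp [gb, ih]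

/-- index -/
def jj (k n : ℕ) : ℕ := (n - k) + (k - n - 1)

lemma prod_X_range (n : ℕ) : ∏ i ∈ range n, (X : ℤ⟦X⟧) ^ i = X ^ (n.choose 2) := by
  induction n with
  | zero => simp
  | succ n ih => rw [prod_range_succ, ih, Nat.choose_succ_succ', ← pow_add]; simp [add_comm]

lemma q_binom_deriv (q : ℤ⟦X⟧) (n : ℕ) :
    (∏ i ∈ range n, (q ^ n - q ^ i)) * (q ^ n) * (∏ i ∈ range n, (q ^ n - q ^ (n + 1 + i))) =
    ∑ k ∈ range (2 * n + 1 + 1), q ^ (k.choose 2) * gb q (2 * n + 1) k * (-1) ^ k *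
      ((q ^ n) ^ (2 * n + 1 - k) * ((2 * n + 1 - k : ℕ) : ℤ⟦X⟧)) := by
  have h := q_binom (Polynomial.C q) (Polynomial.C (q ^ n) * Polynomial.X) (-1) (2 * n + 1)
  have e : 2 * n + 1 = (n + 1) + n := by ring
  have hl : ∏ i ∈ range (2 * n + 1), (Polynomial.C (q ^ n) * Polynomial.X + -1 * Polynomial.C q ^ i)
      = (∏ i ∈ range n, (Polynomial.C (q ^ n) * Polynomial.X + -1 * Polynomial.C q ^ i)) *
        (Polynomial.C (q ^ n) * (Polynomial.X - 1)) *
        (∏ i ∈ range n, (Polynomial.C (q ^ n) * Polynomial.X + -1 * Polynomial.C q ^ (n + 1 + i))) := by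
    rw [e, prod_range_add, prod_range_succ]
    congr 2
    rw [Polynomial.C_pow]; ring
  have hr : ∀ k ∈ range (2 * n + 1 + 1), Polynomial.C q ^ (k.choose 2) * gb (Polynomial.C q) (2 * n + 1) k *
      (-1) ^ k * (Polynomial.C (q ^ n) * Polynomial.X) ^ (2 * n + 1 - k) =
      Polynomial.C (q ^ (k.choose 2) * gb q (2 * n + 1) k * (-1) ^ k * (q ^ n) ^ (2 * n + 1 - k)) *
        Polynomial.X ^ (2 * n + 1 - k) := by
    intro k _
    rw [← gb_map Polynomial.C, mul_pow]
    simp only [map_mul, map_pow, map_neg, map_one]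
    ring
  rw [hl, sum_congr rfl hr] at h
  have h2 := congrArg (fun p => Polynomial.eval 1 (Polynomial.derivative p)) h
  simp only [Polynomial.derivative_mul, Polynomial.eval_add, Polynomial.eval_mul,
    Polynomial.eval_sub, Polynomial.eval_X, Polynomial.eval_one, sub_self, mul_zero, zero_mul,
    Polynomial.derivative_sub, Polynomial.derivative_X, Polynomial.derivative_one, sub_zero,
    Polynomial.derivative_C, zero_add, add_zero, Polynomial.eval_C, mul_one, Polynomial.eval_prod,
    Polynomial.derivative_sum, Polynomial.eval_finsetSum, Polynomial.eval_pow, Polynomial.eval_neg] at h2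
  rw [show (∏ i ∈ range n, (q ^ n - q ^ i)) = ∏ i ∈ range n, (q ^ n + -1 * q ^ i) from
    prod_congr rfl fun i _ => by ring, show (∏ i ∈ range n, (q ^ n - q ^ (n + 1 + i))) =
      ∏ i ∈ range n, (q ^ n + -1 * q ^ (n + 1 + i)) from prod_congr rfl fun i _ => by ring, h2]
  refine sum_congr rfl fun k _ => ?_
  rw [Polynomial.derivative_X_pow]
  simp
  ring

lemma finite_cube (n : ℕ) : Ap (X : ℤ⟦X⟧) n ^ 2 =
    ∑ k ∈ range (2 * n + 1 + 1), (-1) ^ (k + n) * ((2 * n + 1 - k : ℕ) : ℤ⟦X⟧) * X ^ ((jj k n + 1).choose 2) *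
      gb (X : ℤ⟦X⟧) (2 * n + 1) k := by
  have h := q_binom_deriv X n
  have h1 : ∏ i ∈ range n, ((X : ℤ⟦X⟧) ^ n - X ^ i) = (-1) ^ n * X ^ (n.choose 2) * Ap X n := by
    have : ∀ i ∈ range n, ((X : ℤ⟦X⟧) ^ n - X ^ i) = (-1) * X ^ i * (1 - X ^ (n - 1 - i + 1)) := by
      intro i hi
      rw [mem_range] at hi
      obtain ⟨j, rfl⟩ : ∃ j, n = i + 1 + j := ⟨n - (i + 1), by omega⟩
      have : i + 1 + j - 1 - i = j := by omega
      rw [this]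
      ring
    rw [prod_congr rfl this, prod_mul_distrib, prod_mul_distrib, prod_const, prod_X_range, card_range,
        prod_range_reflect (fun i => (1 : ℤ⟦X⟧) - X ^ (i + 1)) n, Ap]
  have h2 : ∏ i ∈ range n, ((X : ℤ⟦X⟧) ^ n - X ^ (n + 1 + i)) = X ^ (n ^ 2) * Ap X n := by
    have : ∀ i ∈ range n, ((X : ℤ⟦X⟧) ^ n - X ^ (n + 1 + i)) = X ^ n * (1 - X ^ (i + 1)) := by
      intro i _
      ring
    rw [prod_congr rfl this, prod_mul_distrib, prod_const, card_range, ← Ap]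
    ring
  have hl : ∀ a b : ℤ⟦X⟧, (-1) ^ n * X ^ (n.choose 2) * a * X ^ n * (X ^ (n ^ 2) * a) =
      X ^ (n.choose 2 + n + n ^ 2) * ((-1) ^ n * a ^ 2) := by intros; ring
  rw [h1, h2, hl _ 0] at h
  have hr : ∑ k ∈ range (2 * n + 1 + 1), (X : ℤ⟦X⟧) ^ (k.choose 2) * gb X (2 * n + 1) k * (-1) ^ k *
      ((X ^ n) ^ (2 * n + 1 - k) * ((2 * n + 1 - k : ℕ) : ℤ⟦X⟧)) = X ^ (n.choose 2 + n + n ^ 2) * ((-1) ^ n *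
      ∑ k ∈ range (2 * n + 1 + 1), (-1) ^ (k + n) * ((2 * n + 1 - k : ℕ) : ℤ⟦X⟧) * X ^ ((jj k n + 1).choose 2) *
      gb (X : ℤ⟦X⟧) (2 * n + 1) k) := by
    rw [mul_sum, mul_sum]
    refine sum_congr rfl fun k hk => ?_
    rw [mem_range] at hk
    have he : k.choose 2 + n * (2 * n + 1 - k) = n.choose 2 + n + n ^ 2 + (jj k n + 1).choose 2 := by
      have e1 := choose_two_mul k
      have e2 := choose_two_mul n
      have e3 := choose_two_mul (jj k n + 1)
      rcases le_or_gt k n with h | h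
      · obtain ⟨j, rfl⟩ := Nat.exists_eq_add_of_le h
        have e4 : 2 * (k + j) + 1 - k = k + 2 * j + 1 := by omega
        have e5 : jj k (k + j) = j := by unfold jj; omega
        rw [e4]
        rw [e5] at e3 ⊢
        nlinarith
      · obtain ⟨j, rfl⟩ := Nat.exists_eq_add_of_lt h
        obtain ⟨l, rfl⟩ : ∃ l, n = j + l := ⟨n - j, by omega⟩
        have e4 : 2 * (j + l) + 1 - (j + l + j + 1) = l := by omega
        have e5 : jj (j + l + j + 1) (j + l) = j := by unfold jj; omega
        rw [e4]
        rw [e5] at e3 ⊢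
        nlinarith
    have h1 : (-1 : ℤ⟦X⟧) ^ n * (-1) ^ (k + n) = (-1) ^ k := by
      rw [← pow_add, show n + (k + n) = k + 2 * n by ring, pow_add, pow_mul]; simp
    rw [← pow_mul]
    calc _ = (-1) ^ k * X ^ (k.choose 2 + n * (2 * n + 1 - k)) * ((2 * n + 1 - k : ℕ) : ℤ⟦X⟧) * gb X (2 * n + 1) k := by
          rw [pow_add]; ring
      _ = _ := by rw [he, ← h1, pow_add]; ring
  rw [hr] at h
  have h' := X_pow_mul_cancel h
  exact (((isUnit_one (M := ℤ⟦X⟧)).neg.pow n).mul_right_inj).1 h'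

/-- truncated Jacobi series for `∏ (1 - X^i)^3` -/
noncomputable def Cp (n : ℕ) : ℤ⟦X⟧ :=
  ∑ j ∈ range (n + 1), (-1) ^ j * ((2 * j + 1 : ℕ) : ℤ⟦X⟧) * X ^ ((j + 1).choose 2)

lemma Cp_unfold (n : ℕ) : Cp n =
    ∑ k ∈ range (2 * n + 1 + 1), (-1) ^ (k + n) * ((2 * n + 1 - k : ℕ) : ℤ⟦X⟧) * X ^ ((jj k n + 1).choose 2) := by
  have e : range (2 * n + 1 + 1) = range ((n + 1) + (n + 1)) := by congr 1; ring
  rw [e, sum_range_add, ← sum_range_reflect, ← sum_add_distrib, Cp]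
  refine sum_congr rfl fun j hj => ?_
  rw [mem_range] at hj
  have h1 : jj (n + 1 - 1 - j) n = j := by unfold jj; omega
  have h2 : jj (n + 1 + j) n = j := by unfold jj; omega
  rw [h1, h2]
  obtain ⟨l, rfl⟩ : ∃ l, n = j + l := ⟨n - j, by omega⟩
  have h3 : j + l + 1 - 1 - j = l := by omega
  have h4 : 2 * (j + l) + 1 - l = l + 2 * j + 1 := by omega
  have h5 : 2 * (j + l) + 1 - (j + l + 1 + j) = l := by omega
  rw [h3, h4, h5]
  have h6 : (-1 : ℤ⟦X⟧) ^ (l + (j + l)) = (-1) ^ j := by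
    rw [show l + (j + l) = j + 2 * l by ring, pow_add, pow_mul]; simp
  have h7 : (-1 : ℤ⟦X⟧) ^ (j + l + 1 + j + (j + l)) = - (-1) ^ j := by
    rw [show j + l + 1 + j + (j + l) = j + 1 + 2 * (l + j) by ring, pow_add, pow_mul, pow_succ]; simp
  rw [h6, h7]
  push_cast
  ring

lemma cube_cong (n : ℕ) : X ^ (n + 1) ∣ Ap (X : ℤ⟦X⟧) n ^ 3 - Cp n := by
  rw [pow_succ (Ap _ _) 2, finite_cube, Cp_unfold, sum_mul, ← sum_sub_distrib]
  refine dvd_sum fun k hk => ?_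
  rw [mem_range] at hk
  have hc := gb_cong (X : ℤ⟦X⟧) (by simp) (2 * n + 1) k (n - jj k n) n (by unfold jj; omega) (by unfold jj; omega) (by omega)
  have : ∀ a b c d : ℤ⟦X⟧, a * b * c * d - a * b = a * (b * (c * d - 1)) := by intros; ring
  rw [this]
  apply Dvd.dvd.mul_left
  refine Dvd.dvd.trans ?_ (mul_dvd_mul_left _ hc)
  rw [← pow_add]
  apply pow_dvd_pow
  have : jj k n ≤ n := by unfold jj; omega
  have h2 : jj k n ≤ (jj k n + 1).choose 2 := by rw [Nat.choose_succ_succ']; simp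
  omega

lemma eight_step (N : ℕ) : ∃ u v : ℤ⟦X⟧, Dp ℤ (2 * N) ^ 3 = phi N * Cp N + 8 * u + X ^ (N + 1) * v := by
  obtain ⟨s, hs⟩ := phi_odd N
  obtain ⟨a, ha⟩ := (pow_dvd_pow X (show N + 1 ≤ 2 * N + 1 by omega)).trans (phi_Dp N)
  obtain ⟨b, hb⟩ := Ap_cong (X : ℤ⟦X⟧) N (2 * N) (by omega)
  obtain ⟨c, hc⟩ := cube_cong N
  have h1 : phi N * Dp ℤ (2 * N) = Ap X N + X ^ (N + 1) * (a + b) := by linear_combination ha + hb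
  have h4 : phi N ^ 4 = 1 + 8 * (s + 3 * s ^ 2 + 4 * s ^ 3 + 2 * s ^ 4) := by rw [hs]; ring
  obtain ⟨d, hd⟩ : X ^ (N + 1) ∣ (phi N * Dp ℤ (2 * N)) ^ 3 - Ap X N ^ 3 :=
    Dvd.dvd.trans ⟨a + b, by linear_combination h1⟩ (sub_dvd_pow_sub_pow _ _ 3)
  refine ⟨- (s + 3 * s ^ 2 + 4 * s ^ 3 + 2 * s ^ 4) * Dp ℤ (2 * N) ^ 3, phi N * (c + d), ?_⟩
  linear_combination -Dp ℤ (2 * N) ^ 3 * h4 + phi N * hc + phi N * hd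

/-- sign `(-1)^(y/2)` for even `y` -/
def sg (y : ℤ) : ℤ := if y % 4 = 0 then 1 else -1

noncomputable def repS (N : ℤ) : Finset (ℤ × ℤ) :=
  (Icc (-N) N ×ˢ Icc (-N) N).filter fun p => p.1 % 4 = 1 ∧ p.1 ^ 2 + 2 * p.2 ^ 2 = N

lemma mem_repS (N : ℤ) (p : ℤ × ℤ) : p ∈ repS N ↔ p.1 % 4 = 1 ∧ p.1 ^ 2 + 2 * p.2 ^ 2 = N := by
  simp only [repS, mem_filter, mem_product, mem_Icc, and_iff_right_iff_imp]
  rintro ⟨_, h⟩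
  have h1 := Int.le_self_sq p.1
  have h2 := Int.le_self_sq p.2
  have h3 := Int.le_self_sq (-p.1)
  have h4 := Int.le_self_sq (-p.2)
  have h5 := sq_nonneg p.1
  have h6 := sq_nonneg p.2
  simp only [neg_sq] at h3 h4
  refine ⟨⟨?_, ?_⟩, ?_, ?_⟩ <;> linarith

lemma sq_mod_eight (y : ℤ) : (y % 4 = 0 ∨ y % 4 = 2) ∧ y ^ 2 % 4 = 0 ∨ (y % 4 = 1 ∨ y % 4 = 3) ∧ y ^ 2 % 8 = 1 := by
  obtain ⟨k, hk⟩ : ∃ k, y = 4 * k + y % 4 := ⟨y / 4, by omega⟩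
  have : y % 4 = 0 ∨ y % 4 = 1 ∨ y % 4 = 2 ∨ y % 4 = 3 := by omega
  rcases this with h | h | h | h <;> rw [h] at hk <;> subst hk <;> ring_nf <;> omega

lemma sq_mod_three (y : ℤ) : y % 3 = 0 ∧ y ^ 2 % 3 = 0 ∨ (y % 3 = 1 ∨ y % 3 = 2) ∧ y ^ 2 % 3 = 1 := by
  obtain ⟨k, hk⟩ : ∃ k, y = 3 * k + y % 3 := ⟨y / 3, by omega⟩
  have : y % 3 = 0 ∨ y % 3 = 1 ∨ y % 3 = 2 := by omega
  rcases this with h | h | h <;> rw [h] at hk <;> subst hk <;> ring_nf <;> omega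

def c1 (p : ℤ × ℤ) : Prop := 27 ∣ p.1 + 5 * p.2 ∧ ¬ 3 ∣ p.2
def c2 (p : ℤ × ℤ) : Prop := 27 ∣ p.1 - 5 * p.2 ∧ ¬ 3 ∣ p.2
def c3 (p : ℤ × ℤ) : Prop := 3 ∣ p.1 ∧ 3 ∣ p.2 ∧ 9 ∣ p.1 - p.2
def c4 (p : ℤ × ℤ) : Prop := 3 ∣ p.1 ∧ 3 ∣ p.2 ∧ 9 ∣ p.1 + p.2

lemma cover (M : ℤ) (hM3 : ¬ 3 ∣ M) (p : ℤ × ℤ) (h : p.1 ^ 2 + 2 * p.2 ^ 2 = 27 * M) :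
    c1 p ∨ c2 p ∨ c3 p ∨ c4 p := by
  obtain ⟨x, y⟩ := p
  simp only [c1, c2, c3, c4] at *
  have hx := sq_mod_three x
  have hy := sq_mod_three y
  by_cases h3 : 3 ∣ x
  · have h3y : 3 ∣ y := by omega
    obtain ⟨a, rfl⟩ := h3
    obtain ⟨b, rfl⟩ := h3y
    have h' : a ^ 2 + 2 * b ^ 2 = 3 * M := by linarith
    have ha := sq_mod_three a
    have hb := sq_mod_three b
    have : ¬ (3 ∣ a ∧ 3 ∣ b) := by
      rintro ⟨⟨c, rfl⟩, d, rfl⟩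
      apply hM3
      exact ⟨c ^ 2 + 2 * d ^ 2, by linarith⟩
    omega
  · have h3y : ¬ 3 ∣ y := by omega
    have hd : (27 : ℤ) ∣ (x + 5 * y) * (x - 5 * y) := ⟨M - y ^ 2, by linear_combination h⟩
    have e : (27 : ℤ) = 3 ^ 3 := by norm_num
    by_cases hxy : 3 ∣ x + 5 * y
    · left
      refine ⟨?_, h3y⟩
      have hn : ¬ 3 ∣ x - 5 * y := by omega
      rw [e] at hd ⊢
      exact (IsCoprime.pow_left ((Int.prime_three.coprime_iff_not_dvd).2 hn)).dvd_of_dvd_mul_right hd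
    · right; left
      refine ⟨?_, h3y⟩
      rw [e] at hd ⊢
      exact (IsCoprime.pow_left ((Int.prime_three.coprime_iff_not_dvd).2 hxy)).dvd_of_dvd_mul_left hd

lemma disj (M : ℤ) (hM3 : ¬ 3 ∣ M) (p : ℤ × ℤ) (h : p.1 ^ 2 + 2 * p.2 ^ 2 = 27 * M) :
    ¬ (c3 p ∧ c4 p) := by
  obtain ⟨x, y⟩ := p
  simp only [c3, c4] at *
  rintro ⟨⟨h1, h2, h3⟩, -, -, h4⟩
  obtain ⟨a, rfl⟩ : 9 ∣ x := by omega
  obtain ⟨b, rfl⟩ : 9 ∣ y := by omega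
  exact hM3 ⟨a ^ 2 + 2 * b ^ 2, by linarith⟩

instance : DecidablePred c1 := fun p => by unfold c1; infer_instance
instance : DecidablePred c2 := fun p => by unfold c2; infer_instance
instance : DecidablePred c3 := fun p => by unfold c3; infer_instance
instance : DecidablePred c4 := fun p => by unfold c4; infer_instance

lemma sum_split (M : ℤ) (hM3 : ¬ 3 ∣ M) (f : ℤ × ℤ → ℤ) :
    ∑ p ∈ repS (27 * M), f p = ∑ p ∈ (repS (27 * M)).filter c1, f p + ∑ p ∈ (repS (27 * M)).filter c2, f p
      + ∑ p ∈ (repS (27 * M)).filter c3, f p + ∑ p ∈ (repS (27 * M)).filter c4, f p := by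
  simp only [sum_filter, ← sum_add_distrib]
  refine sum_congr rfl fun p hp => ?_
  have h := ((mem_repS _ _).1 hp).2
  have h1 := cover M hM3 p h
  have h2 := disj M hM3 p h
  have h12 : ¬ (c1 p ∧ c2 p) := by unfold c1 c2; omega
  have h13 : ¬ (c1 p ∧ c3 p) := by unfold c1 c3; omega
  have h14 : ¬ (c1 p ∧ c4 p) := by unfold c1 c4; omega
  have h23 : ¬ (c2 p ∧ c3 p) := by unfold c2 c3; omega
  have h24 : ¬ (c2 p ∧ c4 p) := by unfold c2 c4; omega
  split_ifs <;> simp_all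

lemma mod_M (M : ℤ) (hM : M % 8 = 3) (p : ℤ × ℤ) (h : p ∈ repS M) : p.2 % 2 = 1 ∧ p.1 % 4 = 1 := by
  rw [mem_repS] at h
  have h1 := sq_mod_eight p.1
  have h2 := sq_mod_eight p.2
  omega

lemma mod_27M (M : ℤ) (hM : M % 8 = 3) (p : ℤ × ℤ) (h : p ∈ repS (27 * M)) : p.2 % 2 = 0 ∧ p.1 % 4 = 1 := by
  rw [mem_repS] at h
  have h1 := sq_mod_eight p.1
  have h2 := sq_mod_eight p.2
  omega

lemma bij1 (M : ℤ) (hM : M % 8 = 3) (hM3 : ¬ 3 ∣ M) (f : ℤ × ℤ → ℤ) :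
    ∑ p ∈ (repS (27 * M)).filter c1, f p = ∑ p ∈ repS M, f (-5 * p.1 - 2 * p.2, p.1 - 5 * p.2) := by
  symm
  refine sum_nbij' (fun p => (-5 * p.1 - 2 * p.2, p.1 - 5 * p.2))
    (fun p => ((-5 * p.1 + 2 * p.2) / 27, (- p.1 - 5 * p.2) / 27)) ?_ ?_ ?_ ?_ ?_
  · intro p hp
    have h := mod_M M hM p hp
    rw [mem_repS] at hp
    simp only [mem_filter, mem_repS, c1]
    have h3 := sq_mod_three p.1
    have h4 := sq_mod_three p.2
    refine ⟨⟨by omega, by linear_combination 27 * hp.2⟩, by omega, ?_⟩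
    omega
  · intro p hp
    rw [mem_filter] at hp
    have h := mod_27M M hM p hp.1
    rw [mem_repS] at hp
    obtain ⟨⟨h1, h2⟩, ⟨a, ha⟩, h3⟩ := hp
    simp only [mem_repS]
    have e : p.1 = 27 * a - 5 * p.2 := by linarith
    have e1 : (-5 * p.1 + 2 * p.2) / 27 = -5 * a + p.2 := by omega
    have e2 : (- p.1 - 5 * p.2) / 27 = - a := by omega
    rw [e1, e2]
    rw [e] at h2
    refine ⟨by omega, by linarith⟩
  · intro p _
    ext <;> simp only <;> omega
  · intro p hp
    rw [mem_filter] at hp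
    obtain ⟨_, ⟨a, ha⟩, h3⟩ := hp
    ext <;> simp only <;> omega
  · intro p hp; rfl

lemma bij2 (M : ℤ) (hM : M % 8 = 3) (hM3 : ¬ 3 ∣ M) (f : ℤ × ℤ → ℤ) :
    ∑ p ∈ (repS (27 * M)).filter c2, f p = ∑ p ∈ repS M, f (-5 * p.1 + 2 * p.2, - p.1 - 5 * p.2) := by
  symm
  refine sum_nbij' (fun p => (-5 * p.1 + 2 * p.2, - p.1 - 5 * p.2))
    (fun p => ((-5 * p.1 - 2 * p.2) / 27, (p.1 - 5 * p.2) / 27)) ?_ ?_ ?_ ?_ ?_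
  · intro p hp
    have h := mod_M M hM p hp
    rw [mem_repS] at hp
    simp only [mem_filter, mem_repS, c2]
    have h3 := sq_mod_three p.1
    have h4 := sq_mod_three p.2
    refine ⟨⟨by omega, by linear_combination 27 * hp.2⟩, by omega, by omega⟩
  · intro p hp
    rw [mem_filter] at hp
    have h := mod_27M M hM p hp.1
    rw [mem_repS] at hp
    simp only [mem_repS]
    obtain ⟨⟨h1, h2⟩, hc⟩ := hp
    unfold c2 at hc
    obtain ⟨a, ha⟩ : ∃ a, -5 * p.1 - 2 * p.2 = 27 * a := ⟨(-5 * p.1 - 2 * p.2) / 27, by omega⟩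
    obtain ⟨b, hb⟩ : ∃ b, p.1 - 5 * p.2 = 27 * b := ⟨(p.1 - 5 * p.2) / 27, by omega⟩
    have e1 : (-5 * p.1 - 2 * p.2) / 27 = a := by omega
    have e2 : (p.1 - 5 * p.2) / 27 = b := by omega
    have e3 : p.1 = -5 * a + 2 * b := by omega
    have e4 : p.2 = - a - 5 * b := by omega
    rw [e1, e2]
    rw [e3, e4] at h2
    refine ⟨by omega, by linarith⟩
  · intro p _
    ext <;> simp only <;> omega
  · intro p hp
    rw [mem_filter] at hp
    unfold c2 at hp
    ext <;> simp only <;> omega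
  · intro p hp; rfl

lemma bij3 (M : ℤ) (hM : M % 8 = 3) (hM3 : ¬ 3 ∣ M) (f : ℤ × ℤ → ℤ) :
    ∑ p ∈ (repS (27 * M)).filter c3, f p = ∑ p ∈ repS M, f (3 * p.1 - 6 * p.2, 3 * p.1 + 3 * p.2) := by
  symm
  refine sum_nbij' (fun p => (3 * p.1 - 6 * p.2, 3 * p.1 + 3 * p.2))
    (fun p => ((p.1 + 2 * p.2) / 9, (p.2 - p.1) / 9)) ?_ ?_ ?_ ?_ ?_
  · intro p hp
    have h := mod_M M hM p hp
    rw [mem_repS] at hp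
    simp only [mem_filter, mem_repS, c3]
    have h3 := sq_mod_three p.1
    have h4 := sq_mod_three p.2
    refine ⟨⟨by omega, by linear_combination 27 * hp.2⟩, by omega, by omega⟩
  · intro p hp
    rw [mem_filter] at hp
    have h := mod_27M M hM p hp.1
    rw [mem_repS] at hp
    simp only [mem_repS]
    obtain ⟨⟨h1, h2⟩, hc⟩ := hp
    unfold c3 at hc
    obtain ⟨a, ha⟩ : ∃ a, p.1 + 2 * p.2 = 9 * a := ⟨(p.1 + 2 * p.2) / 9, by omega⟩
    obtain ⟨b, hb⟩ : ∃ b, p.2 - p.1 = 9 * b := ⟨(p.2 - p.1) / 9, by omega⟩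
    have e1 : (p.1 + 2 * p.2) / 9 = a := by omega
    have e2 : (p.2 - p.1) / 9 = b := by omega
    have e3 : p.1 = 3 * a - 6 * b := by omega
    have e4 : p.2 = 3 * a + 3 * b := by omega
    rw [e1, e2]
    rw [e3, e4] at h2
    refine ⟨by omega, by linarith⟩
  · intro p _
    ext <;> simp only <;> omega
  · intro p hp
    rw [mem_filter] at hp
    unfold c3 at hp
    ext <;> simp only <;> omega
  · intro p hp; rfl

lemma bij4 (M : ℤ) (hM : M % 8 = 3) (hM3 : ¬ 3 ∣ M) (f : ℤ × ℤ → ℤ) :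
    ∑ p ∈ (repS (27 * M)).filter c4, f p = ∑ p ∈ repS M, f (3 * p.1 + 6 * p.2, 3 * p.2 - 3 * p.1) := by
  symm
  refine sum_nbij' (fun p => (3 * p.1 + 6 * p.2, 3 * p.2 - 3 * p.1))
    (fun p => ((p.1 - 2 * p.2) / 9, (p.2 + p.1) / 9)) ?_ ?_ ?_ ?_ ?_
  · intro p hp
    have h := mod_M M hM p hp
    rw [mem_repS] at hp
    simp only [mem_filter, mem_repS, c4]
    have h3 := sq_mod_three p.1
    have h4 := sq_mod_three p.2
    refine ⟨⟨by omega, by linear_combination 27 * hp.2⟩, by omega, by omega⟩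
  · intro p hp
    rw [mem_filter] at hp
    have h := mod_27M M hM p hp.1
    rw [mem_repS] at hp
    simp only [mem_repS]
    obtain ⟨⟨h1, h2⟩, hc⟩ := hp
    unfold c4 at hc
    obtain ⟨a, ha⟩ : ∃ a, p.1 - 2 * p.2 = 9 * a := ⟨(p.1 - 2 * p.2) / 9, by omega⟩
    obtain ⟨b, hb⟩ : ∃ b, p.2 + p.1 = 9 * b := ⟨(p.2 + p.1) / 9, by omega⟩
    have e1 : (p.1 - 2 * p.2) / 9 = a := by omega
    have e2 : (p.2 + p.1) / 9 = b := by omega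
    have e3 : p.1 = 3 * a + 6 * b := by omega
    have e4 : p.2 = 3 * b - 3 * a := by omega
    rw [e1, e2]
    rw [e3, e4] at h2
    refine ⟨by omega, by linarith⟩
  · intro p _
    ext <;> simp only <;> omega
  · intro p hp
    rw [mem_filter] at hp
    unfold c4 at hp
    ext <;> simp only <;> omega
  · intro p hp; rfl

lemma arith (M : ℤ) (hM : M % 8 = 3) (hM3 : ¬ 3 ∣ M) :
    8 ∣ ∑ p ∈ repS (27 * M), p.1 * sg p.2 := by
  rw [sum_split M hM3, bij1 M hM hM3, bij2 M hM hM3, bij3 M hM hM3, bij4 M hM hM3]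
  simp only [← sum_add_distrib]
  refine dvd_sum fun p hp => ?_
  have h := mod_M M hM p hp
  unfold sg
  split_ifs <;> omega

lemma Tcount_mod_eight (N : ℕ) : (8 : ℤ) ∣ (Tcount 2 3 N : ℤ) - coeff N (phi N * Cp N) := by
  obtain ⟨u, v, h⟩ := eight_step N
  have h1 := Tcount_coeff ℤ N (2 * N) (by omega)
  rw [h, map_add, map_add, X_pow_dvd_iff.1 (dvd_mul_right (X ^ (N + 1)) v) N (by omega)] at h1
  have h8 : (8 : ℤ⟦X⟧) = C (8 : ℤ) := by simp
  rw [h8, coeff_C_mul] at h1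
  exact ⟨coeff N u, by linear_combination h1⟩

lemma coeff_phi_Cp (N : ℕ) : coeff N (phi N * Cp N) =
    ∑ p ∈ (range (2 * N + 1) ×ˢ range (N + 1)).filter (fun p => ds p.1 N ^ 2 + (p.2 + 1).choose 2 = N),
      (-1) ^ (p.1 + N) * ((-1) ^ p.2 * (2 * p.2 + 1) : ℤ) := by
  rw [phi, Cp, sum_mul_sum, ← sum_product', map_sum, sum_filter]
  refine sum_congr rfl fun p _ => ?_
  have : (-1 : ℤ⟦X⟧) ^ (p.1 + N) * X ^ (ds p.1 N ^ 2) * ((-1) ^ p.2 * ((2 * p.2 + 1 : ℕ) : ℤ⟦X⟧) * X ^ ((p.2 + 1).choose 2))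
    = C ((-1) ^ (p.1 + N) * ((-1) ^ p.2 * (2 * p.2 + 1) : ℤ)) * X ^ (ds p.1 N ^ 2 + (p.2 + 1).choose 2) := by
    simp only [map_mul, map_pow, map_neg, map_one, map_add, map_ofNat, map_natCast, pow_add]
    push_cast
    ring
  rw [this, coeff_C_mul, coeff_X_pow]
  simp [eq_comm]

lemma neg_one_pow_int (j : ℕ) : (j % 2 = 0 ∧ (-1 : ℤ) ^ j = 1) ∨ (j % 2 = 1 ∧ (-1 : ℤ) ^ j = -1) := by
  rcases Nat.even_or_odd j with h | h
  · left; exact ⟨Nat.even_iff.1 h, h.neg_one_pow⟩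
  · right; exact ⟨Nat.odd_iff.1 h, h.neg_one_pow⟩

lemma ds_sq (k n : ℕ) : ((ds k n : ℕ) : ℤ) ^ 2 = ((k : ℤ) - n) ^ 2 := by
  unfold ds
  rcases le_total k n with h | h
  · rw [show k - n + (n - k) = n - k by omega]; push_cast [h]; ring
  · rw [show k - n + (n - k) = k - n by omega]; push_cast [h]; ring

lemma coeff_eq_repS (N : ℕ) : coeff N (phi N * Cp N) =
    ∑ p ∈ repS (8 * N + 1), p.1 * sg p.2 := by
  rw [coeff_phi_Cp]
  have key : ∀ k j : ℕ, ds k N ^ 2 + (j + 1).choose 2 = N ↔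
      ((-1 : ℤ) ^ j * (2 * j + 1)) ^ 2 + 2 * (2 * ((k : ℤ) - N)) ^ 2 = 8 * N + 1 := by
    intro k j
    have e1 := choose_two_mul (j + 1)
    have e2 := ds_sq k N
    have e3 : ((-1 : ℤ) ^ j) ^ 2 = 1 := by rw [← pow_mul, mul_comm, pow_mul]; simp
    rw [mul_pow, e3, mul_pow, ← e2]
    zify at e1 ⊢
    constructor <;> intro h
    · linear_combination 8 * h - 4 * e1
    · linarith
  refine sum_nbij' (fun p => ((-1) ^ p.2 * (2 * p.2 + 1), 2 * ((p.1 : ℤ) - N)))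
    (fun p => ((p.2 / 2 + N).toNat, (p.1.natAbs - 1) / 2)) ?_ ?_ ?_ ?_ ?_
  · rintro ⟨k, j⟩ hp
    rw [mem_filter] at hp
    rw [mem_repS]
    refine ⟨?_, (key k j).1 hp.2⟩
    rcases neg_one_pow_int j with h | h <;> simp only [h.2] <;> omega
  · rintro ⟨x, y⟩ hp
    rw [mem_repS] at hp
    simp only at hp
    have hx := sq_mod_eight x
    have hy := sq_mod_eight y
    obtain ⟨z, rfl⟩ : ∃ z, y = 2 * z := ⟨y / 2, by omega⟩
    have hz1 := Int.le_self_sq z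
    have hz2 := Int.le_self_sq (-z)
    have hxx : 1 ≤ x ^ 2 := by
      have : x ≠ 0 := by rintro rfl; omega
      have := sq_pos_of_ne_zero this
      omega
    have hzN : z ^ 2 ≤ N := by nlinarith
    rw [neg_sq] at hz2
    have e1 : (2 * z / 2 + (N : ℤ)).toNat = (z + N).toNat := by congr 1; omega
    have e2 : (((z + N).toNat : ℕ) : ℤ) = z + N := by omega
    set j := (x.natAbs - 1) / 2 with hj
    have e3 : (-1 : ℤ) ^ j * (2 * j + 1) = x := by
      rcases neg_one_pow_int j with h | h <;> rw [h.2] <;> omega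
    simp only [mem_filter, mem_product, mem_range]
    rw [e1]
    have hk := (key (z + N).toNat j).2 (by rw [e3, e2]; linear_combination hp.2)
    refine ⟨⟨by omega, ?_⟩, hk⟩
    have h2 : j ≤ (j + 1).choose 2 := by rw [Nat.choose_succ_succ']; simp
    have : 0 ≤ ds (z + N).toNat N ^ 2 := by positivity
    omega
  · rintro ⟨k, j⟩ _
    rcases neg_one_pow_int j with h | h <;> simp only [h.2] <;> ext <;> simp only <;> omega
  · rintro ⟨x, y⟩ hp
    rw [mem_repS] at hp
    simp only at hp
    have hx := sq_mod_eight x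
    have hy := sq_mod_eight y
    have hz1 := Int.le_self_sq (y / 2)
    have hz2 := Int.le_self_sq (-(y / 2))
    obtain ⟨z, rfl⟩ : ∃ z, y = 2 * z := ⟨y / 2, by omega⟩
    have hz1 := Int.le_self_sq z
    have hz2 := Int.le_self_sq (-z)
    have hxx : 0 ≤ x ^ 2 := sq_nonneg x
    have hzN : z ^ 2 ≤ N := by nlinarith
    rw [neg_sq] at hz2
    simp only
    ext
    · rcases neg_one_pow_int ((x.natAbs - 1) / 2) with h | h <;> simp only [h.2] <;> omega
    · simp only; omega
  · rintro ⟨k, j⟩ hp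
    simp only
    rw [mul_comm]
    congr 1
    unfold sg
    rcases neg_one_pow_int (k + N) with h | h <;> rw [h.2] <;> split_ifs <;> omega

lemma Tcount_eight (N : ℕ) (M : ℤ) (h : 8 * (N : ℤ) + 1 = 27 * M) (hM : M % 8 = 3) (hM3 : ¬ 3 ∣ M) :
    8 ∣ Tcount 2 3 N := by
  have h1 := Tcount_mod_eight N
  rw [coeff_eq_repS, h] at h1
  have h2 := arith M hM hM3
  have h3 := dvd_add h1 h2
  rw [sub_add_cancel] at h3
  exact_mod_cast h3

theorem stmt5 (n : ℕ) :
    24 ∣ Tcount 2 3 (81 * n + 37) ∧ 24 ∣ Tcount 2 3 (81 * n + 64) := by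
  have a1 := Tcount_eight (81 * n + 37) (24 * n + 11) (by push_cast; ring) (by omega) (by omega)
  have a2 := Tcount_eight (81 * n + 64) (24 * n + 19) (by push_cast; ring) (by omega) (by omega)
  have b1 := Tcount_three (81 * n + 37) (by omega)
  have b2 := Tcount_three (81 * n + 64) (by omega)
  omega
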